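/- Let π be a policy, let F_0 : 𝒳 → [0,1] be arbitrary, and define F_{k+1}(x) = c(x) + (1 − c(x))·γ·F_k(f(x, π(x))) for all k ≥ 0. Then sup_{x∈𝒳} |F_k(x) − F^π(x)| ≤ γ^k · sup_{x∈𝒳} |F_0(x) − F^π(x)| for every k; in particular the iterates F_k converge uniformly to the constraint decay function F^π. -/

import Mathlib

/-!
The map `G ↦ c + (1 - c) γ (G ∘ f_π)`, where `f_π x = f x (π x)`, is a `γ`-contraction for the sup
distance, and `F^π` is a fixed point of it (`Fcdf_fixed`): if `h x > 0` then `N^π x = 0`, and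
otherwise `N^π x = N^π (f_π x) + 1`, because the trajectory from `x` shifted by one step is the
trajectory from `f_π x`. Since `F 0` and `F^π` both take values in `[0, 1]`, their sup distance is
a genuine supremum, so the contraction estimate iterates to the geometric bound.
-/

open scoped Classical

variable {X U : Type*}

/-- Trajectory from `x` under policy `π`: `x₀ = x`, `x_{t+1} = f xₜ (π xₜ)`. -/
def traj (f : X → U → X) (π : X → U) (x : X) : ℕ → X
  | 0 => x
  | t + 1 => f (traj f π x t) (π (traj f π x t))

/-- Constraint indicator: `c(x) = 1` if `h x > 0`, else `0`. -/
noncomputable def cInd (h : X → ℝ) (x : X) : ℝ := if h x > 0 then 1 else 0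

/-- Constraint decay function `F^π(x) = γ ^ (N^π x)` with `γ ^ ∞ := 0`,
where `N^π x` is the least `t` with `h (xₜ) > 0` along the trajectory. -/
noncomputable def Fcdf (f : X → U → X) (h : X → ℝ) (γ : ℝ) (π : X → U) (x : X) : ℝ :=
  if hx : ∃ t, h (traj f π x t) > 0 then γ ^ Nat.find hx else 0

/-- Feasible region of a policy `π`. -/
def Xfeas (f : X → U → X) (h : X → ℝ) (π : X → U) : Set X :=
  {x | ∀ t, h (traj f π x t) ≤ 0}

/-- Maximum feasible region. -/
def Xstar (f : X → U → X) (h : X → ℝ) : Set X :=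
  {x | ∃ π : X → U, x ∈ Xfeas f h π}

/-- Optimal constraint decay function: infimum of `F^π` over all policies. -/
noncomputable def Fstar (f : X → U → X) (h : X → ℝ) (γ : ℝ) (x : X) : ℝ :=
  ⨅ π : X → U, Fcdf f h γ π x

/-- State-value function of a policy. -/
noncomputable def Vval (f : X → U → X) (r : X → U → ℝ) (γ : ℝ) (π : X → U) (x : X) : ℝ :=
  ∑' t : ℕ, γ ^ t * r (traj f π x t) (π (traj f π x t))

/-- Optimal state-value function: max of `V^π` over policies whose feasible
region equals the maximum feasible region. -/
noncomputable def Vstar (f : X → U → X) (h : X → ℝ) (r : X → U → ℝ) (γ : ℝ) (x : X) : ℝ :=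
  ⨆ π : {π : X → U // Xfeas f h π = Xstar f h}, Vval f r γ π.1 x

theorem traj_succ_shift (f : X → U → X) (π : X → U) (x : X) (t : ℕ) :
    traj f π x (t + 1) = traj f π (f x (π x)) t := by
  induction t with
  | zero => rfl
  | succ t ih =>
    change f (traj f π x (t + 1)) (π (traj f π x (t + 1))) = _
    rw [ih]
    rfl

theorem Fcdf_mem_Icc (f : X → U → X) (h : X → ℝ) (γ : ℝ) (hγ0 : 0 < γ) (hγ1 : γ < 1)
    (π : X → U) (x : X) : Fcdf f h γ π x ∈ Set.Icc (0:ℝ) 1 := by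
  unfold Fcdf
  split_ifs with hx
  · exact ⟨by positivity, pow_le_one₀ hγ0.le hγ1.le⟩
  · simp

/-- `F^π` is a fixed point of the constraint decay operator. -/
theorem Fcdf_fixed (f : X → U → X) (h : X → ℝ) (γ : ℝ) (π : X → U) (x : X) :
    Fcdf f h γ π x = cInd h x + (1 - cInd h x) * γ * Fcdf f h γ π (f x (π x)) := by
  by_cases h0 : h x > 0
  · have hx : ∃ t, h (traj f π x t) > 0 := ⟨0, h0⟩
    have hN : Nat.find hx = 0 := (Nat.find_eq_zero hx).2 h0
    simp [Fcdf, cInd, h0, hx, hN]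
  · have hc : cInd h x = 0 := if_neg h0
    rw [hc]
    by_cases hy : ∃ t, h (traj f π (f x (π x)) t) > 0
    · have hy' : ∃ t, h (traj f π x (t + 1)) > 0 := by
        simpa only [traj_succ_shift] using hy
      have hx : ∃ t, h (traj f π x t) > 0 := hy'.imp' (· + 1) fun _ ht => ht
      have hN : Nat.find hx = Nat.find hy + 1 := by
        rw [Nat.find_comp_succ hx hy' h0]
        simp only [traj_succ_shift]
      rw [Fcdf, Fcdf, dif_pos hx, dif_pos hy, hN, pow_succ]
      ring
    · have hx : ¬ ∃ t, h (traj f π x t) > 0 := by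
        rintro ⟨t, ht⟩
        cases t with
        | zero => exact h0 ht
        | succ t => exact hy ⟨t, by rwa [← traj_succ_shift]⟩
      rw [Fcdf, Fcdf, dif_neg hx, dif_neg hy]
      ring

/-- iterating the constraint decay operator from any
`F₀ : X → [0,1]` converges (geometrically, hence uniformly) to `F^π`. -/
theorem feasible_region_identification_converges (f : X → U → X) (h : X → ℝ) (γ : ℝ)
    (hγ0 : 0 < γ) (hγ1 : γ < 1) (π : X → U)
    (F : ℕ → X → ℝ) (hF0 : ∀ x, F 0 x ∈ Set.Icc (0:ℝ) 1)
    (hrec : ∀ k x, F (k + 1) x = cInd h x + (1 - cInd h x) * γ * F k (f x (π x))) :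
    (∀ k : ℕ, (⨆ x : X, |F k x - Fcdf f h γ π x|) ≤
      γ ^ k * ⨆ x : X, |F 0 x - Fcdf f h γ π x|) ∧
    TendstoUniformly (fun k x => F k x) (Fcdf f h γ π) Filter.atTop := by
  have hbdd : BddAbove (Set.range fun x => |F 0 x - Fcdf f h γ π x|) := by
    refine ⟨1, ?_⟩
    rintro _ ⟨x, rfl⟩
    have h1 := hF0 x
    have h2 := Fcdf_mem_Icc f h γ hγ0 hγ1 π x
    exact abs_le.2 ⟨by linarith [h1.1, h2.2], by linarith [h1.2, h2.1]⟩
  set S : ℝ := ⨆ x : X, |F 0 x - Fcdf f h γ π x| with hS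
  have hS0 : 0 ≤ S := Real.iSup_nonneg fun _ => abs_nonneg _
  have key : ∀ (k : ℕ) (x : X), |F k x - Fcdf f h γ π x| ≤ γ ^ k * S := by
    intro k
    induction k with
    | zero =>
      intro x
      rw [pow_zero, one_mul]
      exact le_ciSup hbdd x
    | succ k ih =>
      intro x
      have hc : |1 - cInd h x| ≤ 1 := by
        unfold cInd
        split_ifs <;> norm_num
      have heq : F (k + 1) x - Fcdf f h γ π x
          = (1 - cInd h x) * (γ * (F k (f x (π x)) - Fcdf f h γ π (f x (π x)))) := by
        rw [hrec, Fcdf_fixed]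
        ring
      rw [heq, abs_mul, abs_mul, abs_of_pos hγ0]
      calc |1 - cInd h x| * (γ * |F k (f x (π x)) - Fcdf f h γ π (f x (π x))|)
          ≤ 1 * (γ * (γ ^ k * S)) := by
            gcongr
            exact ih _
        _ = γ ^ (k + 1) * S := by ring
  refine ⟨fun k => Real.iSup_le (key k) (by positivity), ?_⟩
  rw [Metric.tendstoUniformly_iff]
  intro ε hε
  have hlim : Filter.Tendsto (fun k : ℕ => γ ^ k * S) Filter.atTop (nhds 0) := by
    simpa using (tendsto_pow_atTop_nhds_zero_of_lt_one hγ0.le hγ1).mul_const S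
  filter_upwards [hlim.eventually_lt_const hε] with k hk x
  rw [dist_comm, Real.dist_eq]
  exact (key k x).trans_lt hk
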